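/- Monotonicity of selective risk: Let (Ω, 𝓕, P) be a probability space, conf : Ω → ℝ a measurable confidence score, and L : Ω → ℝ an integrable nonnegative loss. Define the coverage function φ(t) = P(conf ≥ t) and, for any threshold t with φ(t) > 0, the selective risk R(t) = E[L | conf ≥ t]. Assume conf is rank-calibrated with respect to L, i.e., for all t₁ < t₂ with φ(t₁) > φ(t₂) > 0 one has E[L | t₁ ≤ conf < t₂] ≥ E[L | conf ≥ t₂]. Then for any thresholds τ₁ < τ₂ with φ(τ₂) > 0, it holds that R(τ₂) ≤ R(τ₁). -/

import Mathlib

open MeasureTheory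

/-!
If the band `τ₁ ≤ conf < τ₂` is not null, the selective risk at `τ₁` is a convex combination of the
mean loss on the band and the selective risk at `τ₂`, and rank calibration makes the latter the
smaller endpoint. If the band is null, the two selective risks coincide.
-/

theorem setAverage_le_setAverage_of_subset {Ω : Type*} [MeasurableSpace Ω] {μ : Measure Ω}
    {f : Ω → ℝ} {s t : Set Ω} (hst : s ⊆ t) (hs : NullMeasurableSet s μ) (htμ : μ t ≠ ⊤)
    (hf : IntegrableOn f t μ)
    (hdiff : μ (t \ s) ≠ 0 → ⨍ ω in s, f ω ∂μ ≤ ⨍ ω in t \ s, f ω ∂μ) :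
    ⨍ ω in s, f ω ∂μ ≤ ⨍ ω in t, f ω ∂μ := by
  by_cases hnull : μ (t \ s) = 0
  · have hae : s =ᵐ[μ] t := hst.eventuallyLE.antisymm (ae_le_set.2 hnull)
    exact (setAverage_congr hae).le
  · have hmem : ⨍ ω in t \ s ∪ s, f ω ∂μ ∈ segment ℝ (⨍ ω in t \ s, f ω ∂μ) (⨍ ω in s, f ω ∂μ) :=
      average_union_mem_segment disjoint_sdiff_self_left.aedisjoint hs
        (measure_ne_top_of_subset Set.sdiff_subset htμ) (measure_ne_top_of_subset hst htμ)
        (hf.mono_set Set.sdiff_subset) (hf.mono_set hst)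
    rw [Set.sdiff_union_of_subset hst, segment_symm] at hmem
    exact (segment_subset_Icc (hdiff hnull) hmem).1

theorem setOf_le_sdiff_setOf_le {Ω α : Type*} [LinearOrder α] (conf : Ω → α) (t₁ t₂ : α) :
    {ω | t₁ ≤ conf ω} \ {ω | t₂ ≤ conf ω} = {ω | t₁ ≤ conf ω ∧ conf ω < t₂} := by
  ext ω
  simp

theorem nullMeasurableSet_setOf_le {Ω α : Type*} [MeasurableSpace Ω] {μ : Measure Ω} [Preorder α]
    [TopologicalSpace α] [ClosedIciTopology α] [MeasurableSpace α] [OpensMeasurableSpace α]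
    {conf : Ω → α} (hconf : AEMeasurable conf μ) (t : α) :
    NullMeasurableSet {ω | t ≤ conf ω} μ :=
  hconf.nullMeasurableSet_preimage measurableSet_Ici

section SelectiveRisk

variable {Ω α : Type*} [MeasurableSpace Ω]

section Definitions

variable [Preorder α] (μ : Measure Ω) (conf : Ω → α) (L : Ω → ℝ)

/-- The coverage `P(conf ≥ t)` of the selective classifier that answers when `conf ≥ t`. -/
noncomputable def coverage (t : α) : ℝ :=
  μ.real {ω | t ≤ conf ω}

/-- The selective risk `E[L | conf ≥ t]`, encoded as the average of `L` over `{conf ≥ t}`; it takes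
the junk value `0` when the coverage at `t` vanishes. -/
noncomputable def selectiveRisk (t : α) : ℝ :=
  ⨍ ω in {ω | t ≤ conf ω}, L ω ∂μ

/-- Rank calibration of `conf` with respect to the loss `L`: the mean loss on a confidence band
`t₁ ≤ conf < t₂` is at least the selective risk at `t₂`. The comparison is required only when the
band and the acceptance region above it both have positive measure. -/
def RankCalibrated : Prop :=
  ∀ t₁ t₂ : α, t₁ < t₂ → coverage μ conf t₂ < coverage μ conf t₁ → 0 < coverage μ conf t₂ →
    selectiveRisk μ conf L t₂ ≤ ⨍ ω in {ω | t₁ ≤ conf ω ∧ conf ω < t₂}, L ω ∂μ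

theorem selectiveRisk_eq_div (t : α) :
    selectiveRisk μ conf L t = (∫ ω in {ω | t ≤ conf ω}, L ω ∂μ) / coverage μ conf t := by
  rw [selectiveRisk, coverage, setAverage_eq, smul_eq_mul, inv_mul_eq_div]

theorem antitone_coverage [IsFiniteMeasure μ] : Antitone (coverage μ conf) :=
  fun _ _ hst => measureReal_mono fun _ hω => hst.trans hω

end Definitions

variable [LinearOrder α] [TopologicalSpace α] [ClosedIciTopology α] [MeasurableSpace α]
  [OpensMeasurableSpace α] {μ : Measure Ω} [IsFiniteMeasure μ] {conf : Ω → α} {L : Ω → ℝ}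

theorem measureReal_band_eq_coverage_sub (hconf : AEMeasurable conf μ) {t₁ t₂ : α} (ht : t₁ ≤ t₂) :
    μ.real {ω | t₁ ≤ conf ω ∧ conf ω < t₂} = coverage μ conf t₁ - coverage μ conf t₂ := by
  have hsub : {ω | t₂ ≤ conf ω} ⊆ {ω | t₁ ≤ conf ω} := fun _ hω => ht.trans hω
  have hadd : coverage μ conf t₂ + μ.real ({ω | t₁ ≤ conf ω} \ {ω | t₂ ≤ conf ω}) =
      coverage μ conf t₁ := by
    simpa only [coverage, Set.inter_eq_self_of_subset_right hsub] using
      measureReal_inter_add_sdiff₀ (s := {ω | t₁ ≤ conf ω}) (nullMeasurableSet_setOf_le hconf t₂)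
  rw [← setOf_le_sdiff_setOf_le, ← hadd, add_sub_cancel_left]

theorem rankCalibrated_iff_div (hconf : AEMeasurable conf μ) :
    RankCalibrated μ conf L ↔
      ∀ t₁ t₂ : α, t₁ < t₂ → coverage μ conf t₂ < coverage μ conf t₁ → 0 < coverage μ conf t₂ →
        (∫ ω in {ω | t₂ ≤ conf ω}, L ω ∂μ) / coverage μ conf t₂ ≤
          (∫ ω in {ω | t₁ ≤ conf ω ∧ conf ω < t₂}, L ω ∂μ) /
            (coverage μ conf t₁ - coverage μ conf t₂) := by
  refine forall₃_congr fun t₁ t₂ ht => ?_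
  rw [selectiveRisk_eq_div, setAverage_eq, measureReal_band_eq_coverage_sub hconf ht.le,
    smul_eq_mul, inv_mul_eq_div]

theorem selective_risk_monotone_general (hconf : AEMeasurable conf μ) (hL : Integrable L μ)
    (hrank : RankCalibrated μ conf L) :
    AntitoneOn (selectiveRisk μ conf L) {t | 0 < coverage μ conf t} := by
  intro τ₁ _ τ₂ (hcov : 0 < coverage μ conf τ₂) hτ
  obtain rfl | hlt := hτ.eq_or_lt
  · rfl
  refine setAverage_le_setAverage_of_subset (fun _ hω => hτ.trans hω)
    (nullMeasurableSet_setOf_le hconf τ₂) (measure_ne_top _ _) hL.integrableOn fun hband => ?_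
  rw [setOf_le_sdiff_setOf_le] at hband ⊢
  have hpos : 0 < coverage μ conf τ₁ - coverage μ conf τ₂ :=
    measureReal_band_eq_coverage_sub hconf hτ ▸ ENNReal.toReal_pos hband (measure_ne_top _ _)
  exact hrank τ₁ τ₂ hlt (sub_pos.1 hpos) hcov

end SelectiveRisk

/-- **Monotonicity of selective risk.**
On a probability space, with a measurable confidence score `conf` and an
integrable nonnegative loss `L`, define the coverage `φ t = P(conf ≥ t)` and,
whenever `φ t > 0`, the selective risk `R t = E[L | conf ≥ t]`
(conditional expectation written as the ratio of the restricted integral to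
the coverage).  If `conf` is rank-calibrated with respect to `L`, i.e. for all
`t₁ < t₂` with `φ t₁ > φ t₂ > 0` the band-conditional expected loss
`E[L | t₁ ≤ conf < t₂]` is at least `E[L | conf ≥ t₂]`, then for any
thresholds `τ₁ < τ₂` with `φ τ₂ > 0` we have `R τ₂ ≤ R τ₁`. -/
theorem selective_risk_monotone
    {Ω : Type*} [MeasurableSpace Ω] (μ : Measure Ω) [IsProbabilityMeasure μ]
    (conf L : Ω → ℝ) (hconf : Measurable conf)
    (hL : Integrable L μ) (hLnonneg : ∀ ω, 0 ≤ L ω)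
    (φ : ℝ → ℝ) (hφ : ∀ t, φ t = (μ {ω | t ≤ conf ω}).toReal)
    (R : ℝ → ℝ)
    (hR : ∀ t, R t = (∫ ω in {ω | t ≤ conf ω}, L ω ∂μ) / φ t)
    (hrank : ∀ t₁ t₂ : ℝ, t₁ < t₂ → φ t₂ < φ t₁ → 0 < φ t₂ →
      (∫ ω in {ω | t₂ ≤ conf ω}, L ω ∂μ) / φ t₂ ≤
        (∫ ω in {ω | t₁ ≤ conf ω ∧ conf ω < t₂}, L ω ∂μ) / (φ t₁ - φ t₂))
    (τ₁ τ₂ : ℝ) (hτ : τ₁ < τ₂) (hcov : 0 < φ τ₂) :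
    R τ₂ ≤ R τ₁ := by
  obtain rfl : φ = coverage μ conf := funext hφ
  obtain rfl : R = selectiveRisk μ conf L :=
    funext fun t => (hR t).trans (selectiveRisk_eq_div μ conf L t).symm
  exact selective_risk_monotone_general hconf.aemeasurable hL
    ((rankCalibrated_iff_div hconf.aemeasurable).2 hrank)
    (hcov.trans_le (antitone_coverage μ conf hτ.le)) hcov hτ.le
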